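/- Let (t, n, b) be a smooth right-handed orthonormal frame on an open set U ⊆ ℝ³, let β be a smooth nowhere-zero scalar function and η a smooth scalar function on U, and set J = β(b − ηn). Then J satisfies the Jacobi identity J·(curl J) = 0 on U if and only if η satisfies the Riccati equation ∂_s η = Ω_b − η Ω_nb + η² Ω_n at every point of U. -/

import Mathlib

/-!
The density `w·curl w` is a quadratic form in `w` with polarization `crossHel`, and a scalar
factor only rescales it, since `w·(∇β × w) = 0`. Expanding it at `w = b - η n` gives
`Ω_b - η Ω_nb + η² Ω_n - b·(∇η × n)`. The only derivative of `η` left is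
`b·(∇η × n) = (n × b)·∇η`, which is `∂_s η` because a right-handed orthonormal frame satisfies
`t = n × b`.
-/

noncomputable section

/-- Three-dimensional Euclidean space. -/
abbrev E3 : Type := EuclideanSpace ℝ (Fin 3)

/-- The Euclidean dot product on ℝ³. -/
def dot (u v : E3) : ℝ := ∑ i, u i * v i

/-- The cross product on ℝ³. -/
def cross (u v : E3) : E3 :=
  (WithLp.equiv 2 (Fin 3 → ℝ)).symm
    ![u 1 * v 2 - u 2 * v 1, u 2 * v 0 - u 0 * v 2, u 0 * v 1 - u 1 * v 0]

/-- Partial derivative of a scalar function in the `i`-th coordinate direction. -/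
def pd (i : Fin 3) (f : E3 → ℝ) (x : E3) : ℝ :=
  fderiv ℝ f x (EuclideanSpace.single i 1)

/-- The gradient ∇f of a scalar function. -/
def grad (f : E3 → ℝ) (x : E3) : E3 :=
  (WithLp.equiv 2 (Fin 3 → ℝ)).symm ![pd 0 f x, pd 1 f x, pd 2 f x]

/-- The curl ∇×F of a vector field. -/
def curl (F : E3 → E3) (x : E3) : E3 :=
  (WithLp.equiv 2 (Fin 3 → ℝ)).symm
    ![pd 1 (fun y => F y 2) x - pd 2 (fun y => F y 1) x,
      pd 2 (fun y => F y 0) x - pd 0 (fun y => F y 2) x,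
      pd 0 (fun y => F y 1) x - pd 1 (fun y => F y 0) x]

/-- Directional derivative ∂ₛ f = t·∇f of a scalar function along a vector field t. -/
def ds (t : E3 → E3) (f : E3 → ℝ) (x : E3) : ℝ := dot (t x) (grad f x)

/-- Componentwise directional derivative (u·∇)w of a vector field w along u. -/
def dirDeriv (u w : E3 → E3) (x : E3) : E3 :=
  (WithLp.equiv 2 (Fin 3 → ℝ)).symm
    ![fderiv ℝ (fun y => w y 0) x (u x),
      fderiv ℝ (fun y => w y 1) x (u x),
      fderiv ℝ (fun y => w y 2) x (u x)]

/-- Helicity density w·(curl w) of a vector field. -/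
def hel (w : E3 → E3) (x : E3) : ℝ := dot (w x) (curl w x)

/-- Cross-helicity sum n·(curl b) + b·(curl n). -/
def crossHel (n b : E3 → E3) (x : E3) : ℝ :=
  dot (n x) (curl b x) + dot (b x) (curl n x)

/-- A smooth right-handed orthonormal (Serret–Frenet type) frame on U. -/
def IsFrameOn (t n b : E3 → E3) (U : Set E3) : Prop :=
  ContDiffOn ℝ (⊤ : ℕ∞) t U ∧ ContDiffOn ℝ (⊤ : ℕ∞) n U ∧ ContDiffOn ℝ (⊤ : ℕ∞) b U ∧
  ∀ x ∈ U, ‖t x‖ = 1 ∧ ‖n x‖ = 1 ∧ ‖b x‖ = 1 ∧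
    dot (t x) (n x) = 0 ∧ dot (t x) (b x) = 0 ∧ dot (n x) (b x) = 0 ∧
    b x = cross (t x) (n x)

section VectorAlgebra

lemma dot_self (u : E3) : dot u u = ‖u‖ ^ 2 := by
  rw [EuclideanSpace.real_norm_sq_eq]
  exact Finset.sum_congr rfl fun i _ => (pow_two (u i)).symm

lemma dot_comm (u v : E3) : dot u v = dot v u := dotProduct_comm _ _

lemma dot_add (u v w : E3) : dot u (v + w) = dot u v + dot u w := dotProduct_add _ _ _

lemma dot_sub (u v w : E3) : dot u (v - w) = dot u v - dot u w := dotProduct_sub _ _ _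

lemma sub_dot (u v w : E3) : dot (u - v) w = dot u w - dot v w := sub_dotProduct _ _ _

lemma dot_smul (a : ℝ) (u v : E3) : dot u (a • v) = a * dot u v := dotProduct_smul _ _ _

lemma smul_dot (a : ℝ) (u v : E3) : dot (a • u) v = a * dot u v := smul_dotProduct _ _ _

lemma dot_cross_self_right (u v : E3) : dot u (cross v u) = 0 := dot_cross_self _ _

lemma dot_cross_rotate (u v w : E3) : dot u (cross v w) = dot v (cross w u) :=
  triple_product_permutation _ _ _

lemma cross_cross_self_right (u v : E3) :
    cross v (cross u v) = dot v v • u - dot u v • v :=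
  congrArg (WithLp.toLp 2) (cross_cross_eq_smul_sub_smul' v.ofLp u.ofLp v.ofLp)

end VectorAlgebra

lemma IsFrameOn.tangent_eq_cross {t n b : E3 → E3} {U : Set E3} (h : IsFrameOn t n b U) {x : E3}
    (hx : x ∈ U) : t x = cross (n x) (b x) := by
  obtain ⟨-, hn, -, htn, -, -, hb⟩ := h.2.2.2 x hx
  rw [hb, cross_cross_self_right, dot_self, hn, htn, one_pow, one_smul, zero_smul, sub_zero]

section Calculus

variable {f g : E3 → ℝ} {F G : E3 → E3} {x : E3}

lemma pd_mul (hf : DifferentiableAt ℝ f x) (hg : DifferentiableAt ℝ g x) (i : Fin 3) :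
    pd i (fun y => f y * g y) x = f x * pd i g x + g x * pd i f x := by
  simp only [pd, fderiv_fun_mul hf hg, add_apply, smul_apply, smul_eq_mul]

lemma pd_sub (hf : DifferentiableAt ℝ f x) (hg : DifferentiableAt ℝ g x) (i : Fin 3) :
    pd i (fun y => f y - g y) x = pd i f x - pd i g x := by
  simp only [pd, fderiv_fun_sub hf hg, sub_apply]

lemma curl_sub (hF : DifferentiableAt ℝ F x) (hG : DifferentiableAt ℝ G x) :
    curl (fun y => F y - G y) x = curl F x - curl G x := by
  have hFi := differentiableAt_euclidean.mp hF
  have hGi := differentiableAt_euclidean.mp hG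
  ext i
  fin_cases i <;>
    simp only [curl, WithLp.equiv_symm_apply, PiLp.sub_apply, pd_sub (hFi _) (hGi _),
      Fin.zero_eta, Fin.mk_one, Fin.reduceFinMk, Matrix.cons_val] <;>
    ring

lemma curl_smul (hf : DifferentiableAt ℝ f x) (hF : DifferentiableAt ℝ F x) :
    curl (fun y => f y • F y) x = cross (grad f x) (F x) + f x • curl F x := by
  have hFi := differentiableAt_euclidean.mp hF
  ext i
  fin_cases i <;>
    simp only [curl, cross, grad, WithLp.equiv_symm_apply, PiLp.add_apply, PiLp.smul_apply,
      smul_eq_mul, pd_mul hf (hFi _), Fin.zero_eta, Fin.mk_one, Fin.reduceFinMk,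
      Matrix.cons_val] <;>
    ring

lemma hel_smul (hf : DifferentiableAt ℝ f x) (hF : DifferentiableAt ℝ F x) :
    hel (fun y => f y • F y) x = f x ^ 2 * hel F x := by
  rw [hel, curl_smul hf hF, smul_dot, dot_add, dot_cross_self_right, dot_smul, hel]
  ring

lemma hel_sub (hF : DifferentiableAt ℝ F x) (hG : DifferentiableAt ℝ G x) :
    hel (fun y => F y - G y) x = hel F x - crossHel G F x + hel G x := by
  rw [hel, curl_sub hF hG, sub_dot, dot_sub, dot_sub, crossHel, hel, hel]
  ring

lemma crossHel_smul_left (hf : DifferentiableAt ℝ f x) (hF : DifferentiableAt ℝ F x) :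
    crossHel (fun y => f y • F y) G x =
      f x * crossHel F G x + dot (cross (F x) (G x)) (grad f x) := by
  have triple : dot (G x) (cross (grad f x) (F x)) = dot (cross (F x) (G x)) (grad f x) := by
    rw [dot_cross_rotate, dot_comm]
  rw [crossHel, curl_smul hf hF, smul_dot, dot_add, dot_smul, triple, crossHel]
  ring

lemma hel_sub_smul (hf : DifferentiableAt ℝ f x) (hF : DifferentiableAt ℝ F x)
    (hG : DifferentiableAt ℝ G x) :
    hel (fun y => G y - f y • F y) x =
      hel G x - f x * crossHel F G x + f x ^ 2 * hel F x
        - dot (cross (F x) (G x)) (grad f x) := by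
  rw [hel_sub hG (hf.fun_smul hF), crossHel_smul_left hf hF, hel_smul hf hF]
  ring

end Calculus

theorem jacobi_iff_riccati_eta_general {t n b : E3 → E3} {β η : E3 → ℝ} {x : E3}
    (ht : t x = cross (n x) (b x)) (hn : DifferentiableAt ℝ n x) (hb : DifferentiableAt ℝ b x)
    (hβ : DifferentiableAt ℝ β x) (hη : DifferentiableAt ℝ η x) (hβ0 : β x ≠ 0) :
    dot (β x • (b x - η x • n x)) (curl (fun y => β y • (b y - η y • n y)) x) = 0
      ↔ ds t η x = hel b x - η x * crossHel n b x + η x ^ 2 * hel n x := by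
  change hel (fun y => β y • (b y - η y • n y)) x = 0 ↔ _
  rw [hel_smul hβ (hb.fun_sub (hη.fun_smul hn)), mul_eq_zero,
    or_iff_right (pow_ne_zero 2 hβ0), hel_sub_smul hη hn hb, ← ht, sub_eq_zero, eq_comm, ds]

/-- J = β(b − ηn) satisfies the Jacobi identity iff η satisfies the
Riccati equation ∂ₛη = Ωᵦ − η Ωₙᵦ + η² Ωₙ. -/
theorem jacobi_iff_riccati_eta
    (U : Set E3) (hU : IsOpen U) (t n b : E3 → E3)
    (hframe : IsFrameOn t n b U)
    (β η : E3 → ℝ)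
    (hβ : ContDiffOn ℝ (⊤ : ℕ∞) β U) (hη : ContDiffOn ℝ (⊤ : ℕ∞) η U)
    (hβ0 : ∀ x ∈ U, β x ≠ 0) :
    (∀ x ∈ U, dot (β x • (b x - η x • n x))
        (curl (fun y => β y • (b y - η y • n y)) x) = 0)
      ↔ (∀ x ∈ U, ds t η x
          = hel b x - η x * crossHel n b x + η x ^ 2 * hel n x) := by
  have ⟨_, hn, hb, _⟩ := hframe
  refine forall₂_congr fun x hx => ?_
  have hUx : U ∈ nhds x := hU.mem_nhds hx
  have infty_ne_zero : ((⊤ : ℕ∞) : WithTop ℕ∞) ≠ 0 := by simp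
  exact jacobi_iff_riccati_eta_general (hframe.tangent_eq_cross hx)
    ((hn.contDiffAt hUx).differentiableAt infty_ne_zero)
    ((hb.contDiffAt hUx).differentiableAt infty_ne_zero)
    ((hβ.contDiffAt hUx).differentiableAt infty_ne_zero)
    ((hη.contDiffAt hUx).differentiableAt infty_ne_zero) (hβ0 x hx)
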